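/- Let k be a field, A = k[X₀', X₁', X₀, …, Xₙ], and let D : A → A be a derivation (an additive map satisfying the Leibniz rule D(ab) = a·D(b) + D(a)·b). Then for every ideal I of A, the inclusion D(I) ⊆ eq(I) implies D(eq(I)) ⊆ eq(I); in particular D is correct with respect to every ideal 𝔭 of A. -/

import Mathlib

open scoped Classical

noncomputable section

/-- The height (rank) of an ideal: the minimum of the heights of the primes containing it. -/
noncomputable def idealHeight {R : Type*} [CommRing R] (I : Ideal R) : ℕ∞ :=
  ⨅ (p : PrimeSpectrum R) (_ : I ≤ p.asIdeal), Order.height p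

/-- The contraction `I·A_𝔭 ∩ A` of an ideal `I` through the localization at a prime `𝔭`. -/
noncomputable def locContract {R : Type*} [CommRing R] (p : Ideal R) [p.IsPrime]
    (I : Ideal R) : Ideal R :=
  (I.map (algebraMap R (Localization.AtPrime p))).comap (algebraMap R (Localization.AtPrime p))

/-- `eq(I)`: the equidimensional part of minimal rank of `I`, i.e. the intersection of the
contractions `I·A_𝔮 ∩ A` over the minimal primes `𝔮` of `I` of minimal height. -/
noncomputable def eqPart {R : Type*} [CommRing R] (I : Ideal R) : Ideal R :=
  ⨅ (p : PrimeSpectrum R) (_ : p.asIdeal ∈ I.minimalPrimes)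
    (_ : idealHeight p.asIdeal = idealHeight I), locContract p.asIdeal I

/-- An ideal is equidimensional if all associated primes of `R ⧸ J` have height `height J`. -/
def IsEquidimensional {R : Type*} [CommRing R] (J : Ideal R) : Prop :=
  ∀ q ∈ associatedPrimes R (R ⧸ J), idealHeight q = idealHeight J

/-- The length of a module, as the longest chain of submodules. -/
noncomputable def moduleLength (R M : Type*) [Ring R] [AddCommGroup M] [Module R M] : ℕ∞ :=
  Order.height (⊤ : Submodule R M)

/-- `m(I)`: the number of primary components of minimal height of `I`, counted with their
length as multiplicity: the sum over primes `𝔮` with `height 𝔮 = height I` of the length of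
the `A_𝔮`-module `(A/I)_𝔮`. -/
noncomputable def mIdeal {R : Type*} [CommRing R] (I : Ideal R) : ℕ∞ :=
  ∑' p : PrimeSpectrum R,
    if idealHeight p.asIdeal = idealHeight I then
      moduleLength (Localization.AtPrime p.asIdeal)
        (LocalizedModule p.asIdeal.primeCompl (R ⧸ I))
    else 0

theorem mem_locContract_iff {R : Type*} [CommRing R] {p : Ideal R} [p.IsPrime] {I : Ideal R}
    {x : R} : x ∈ locContract p I ↔ ∃ s ∉ p, s * x ∈ I := by
  rw [locContract, Ideal.mem_comap,
    IsLocalization.algebraMap_mem_map_algebraMap_iff p.primeCompl]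
  rfl

theorem mem_locContract_of_mul_mem {R : Type*} [CommRing R] {p : Ideal R} [p.IsPrime]
    {I : Ideal R} {s x : R} (hs : s ∉ p) (h : s * x ∈ locContract p I) :
    x ∈ locContract p I := by
  obtain ⟨t, ht, htx⟩ := mem_locContract_iff.mp h
  exact mem_locContract_iff.mpr
    ⟨t * s, Ideal.IsPrime.mul_notMem inferInstance ht hs, by rwa [mul_assoc]⟩

/-- If a map satisfying the Leibniz rule sends `I` into `I·A_𝔭 ∩ A`, then it preserves
`I·A_𝔭 ∩ A`. -/
theorem leibniz_map_mem_locContract {R : Type*} [CommRing R] {p : Ideal R} [p.IsPrime]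
    {I : Ideal R} {D : R → R} (hleib : ∀ a b, D (a * b) = a * D b + D a * b)
    (hI : ∀ a ∈ I, D a ∈ locContract p I) {x : R} (hx : x ∈ locContract p I) :
    D x ∈ locContract p I := by
  obtain ⟨s, hs, hsx⟩ := mem_locContract_iff.mp hx
  have hD := hI _ hsx
  rw [hleib] at hD
  exact mem_locContract_of_mul_mem hs
    ((Ideal.add_mem_iff_left _ (Ideal.mul_mem_left _ (D s) hx)).mp hD)

/-- A derivation of the polynomial ring is correct with respect to every ideal
(Corollary `exemple_OpDiff_Correcte` of the paper): for every ideal `I`,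
`D(I) ⊆ eq(I)` implies `D(eq(I)) ⊆ eq(I)`. -/
theorem derivation_is_correct
    {k : Type*} [Field k] (n : ℕ)
    (D : MvPolynomial (Fin 2 ⊕ Fin (n + 1)) k → MvPolynomial (Fin 2 ⊕ Fin (n + 1)) k)
    (hadd : ∀ a b, D (a + b) = D a + D b)
    (hleib : ∀ a b, D (a * b) = a * D b + D a * b) :
    ∀ I : Ideal (MvPolynomial (Fin 2 ⊕ Fin (n + 1)) k),
      (∀ a ∈ I, D a ∈ eqPart I) → ∀ a ∈ eqPart I, D a ∈ eqPart I := by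
  intro I hI a ha
  simp only [eqPart, Ideal.mem_iInf] at hI ha ⊢
  intro p hp hht
  exact leibniz_map_mem_locContract hleib (fun b hb => hI b hb p hp hht) (ha p hp hht)
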